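/- Let ℓ be a prime, m ≥ 0 and n ≥ 1 integers. For i = 1, 2 let u_i = (diag(ℓ^{a_i+b_i}, ℓ^{b_i}, ℓ^{a_i}, 1), diag(ℓ^{d_i}, ℓ^{c_i})) ∈ G(ℚ_ℓ), where a_i, b_i, c_i, d_i are integers with b_i ≥ a_i ≥ 0, d_i ≥ c_i ≥ 0 and a_i + b_i = c_i + d_i. Then B_{m,n} · u₁ · B_{m,n} · u₂ · B_{m,n} = B_{m,n} · u₁u₂ · B_{m,n}, and the number of left B_{m,n}-cosets contained in B_{m,n} · u₁u₂ · B_{m,n} is finite and equals the product of the numbers of left B_{m,n}-cosets contained in B_{m,n} · u₁ · B_{m,n} and in B_{m,n} · u₂ · B_{m,n}. -/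

import Mathlib

open Pointwise

noncomputable section

/-- The ambient ring containing `G(ℚ_ℓ) = (GSp₄ ×_{GL₁} GL₂)(ℚ_ℓ)`:
pairs of a 4×4 and a 2×2 matrix over `ℚ_ℓ`. -/
abbrev MG (p : ℕ) [Fact p.Prime] :=
  Matrix (Fin 4) (Fin 4) ℚ_[p] × Matrix (Fin 2) (Fin 2) ℚ_[p]

/-- The standard skew-symmetric matrix `J` defining `GSp₄`. -/
def Jmat (p : ℕ) [Fact p.Prime] : Matrix (Fin 4) (Fin 4) ℚ_[p] :=
  !![0, 0, 0, 1; 0, 0, 1, 0; 0, -1, 0, 0; -1, 0, 0, 0]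

/-- `G(ℤ_ℓ)`: pairs `(g, h)` with `g ∈ GSp₄(ℤ_ℓ)`, `h ∈ GL₂(ℤ_ℓ)` and
`μ(g) = det h`. -/
def GZ (p : ℕ) [Fact p.Prime] : Set (MG p) :=
  {x | (∀ i j, ‖x.1 i j‖ ≤ 1) ∧ (∀ i j, ‖x.2 i j‖ ≤ 1) ∧
    ‖x.1.det‖ = 1 ∧ ‖x.2.det‖ = 1 ∧
    x.1.transpose * Jmat p * x.1 = x.2.det • Jmat p}

/-- The subgroup `B_{m,n}` of `G(ℤ_ℓ)`: pairs `(g, h)` with `μ(g) ≡ 1 (mod ℓ^m)`, the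
entries of `g` below the diagonal divisible by `ℓⁿ`, the (4,4)-entry of `g` `≡ 1 (mod ℓⁿ)`,
and the (2,1)-entry of `h` divisible by `ℓⁿ`. -/
def Bmn (p : ℕ) [Fact p.Prime] (m n : ℕ) : Set (MG p) :=
  {x ∈ GZ p | ‖x.2.det - 1‖ ≤ (p : ℝ) ^ (-(m : ℤ)) ∧
    ‖x.1 1 0‖ ≤ (p : ℝ) ^ (-(n : ℤ)) ∧ ‖x.1 2 0‖ ≤ (p : ℝ) ^ (-(n : ℤ)) ∧
    ‖x.1 2 1‖ ≤ (p : ℝ) ^ (-(n : ℤ)) ∧ ‖x.1 3 0‖ ≤ (p : ℝ) ^ (-(n : ℤ)) ∧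
    ‖x.1 3 1‖ ≤ (p : ℝ) ^ (-(n : ℤ)) ∧ ‖x.1 3 2‖ ≤ (p : ℝ) ^ (-(n : ℤ)) ∧
    ‖x.1 3 3 - 1‖ ≤ (p : ℝ) ^ (-(n : ℤ)) ∧ ‖x.2 1 0‖ ≤ (p : ℝ) ^ (-(n : ℤ))}

/-- The element `u = (diag(ℓ^{a+b}, ℓ^b, ℓ^a, 1), diag(ℓ^d, ℓ^c))` of `G(ℚ_ℓ)`. -/
def vElt (p : ℕ) [Fact p.Prime] (a b c d : ℕ) : MG p :=
  (Matrix.diagonal ![(p : ℚ_[p]) ^ (a + b), (p : ℚ_[p]) ^ b, (p : ℚ_[p]) ^ a, 1],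
    Matrix.diagonal ![(p : ℚ_[p]) ^ d, (p : ℚ_[p]) ^ c])

/-- The set of left `V`-cosets meeting a subset `S` of `G(ℚ_ℓ)`. -/
def lcosets (p : ℕ) [Fact p.Prime] (V S : Set (MG p)) : Set (Set (MG p)) :=
  (fun g => ({g} : Set (MG p)) * V) '' S

/-!
Let `P` and `N` be the upper and lower triangular parts of `B = B_{m,n}`. Since `n ≥ 1`, column
operations give the Iwahori factorization `B = P N`. For a dominant diagonal `u` one has
`u P u⁻¹ ⊆ P` and `u⁻¹ N u ⊆ N`, so in `B u (x y) v B` with `x ∈ P` and `y ∈ N` the factor `x` moves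
to the left through `u` and `y` to the right through `v`: hence `B u B v B = B u v B`. Similarly
`B u B / B` is the `P`-orbit of `u B`, whose stabilizer is `u P u⁻¹`, so it has `[P : u P u⁻¹]`
elements. This index is finite by compactness of `P`, and it is multiplicative in `u` because of the
chain `uv P (uv)⁻¹ ⊆ u P u⁻¹ ⊆ P`.
-/

open scoped MatrixGroups

section Hecke

variable {Γ : Type*} [Group Γ] {B T L : Subgroup Γ} {u v : Γ}

/-- The positive elements of `T ⊓ L` relative to `B`, those whose conjugation contracts `B ⊓ T`
and whose inverse conjugation contracts `B ⊓ L`. In applications `T` and `L` are opposite Borel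
subgroups, so that `T ⊓ L` is a torus. -/
def positiveSubmonoid (B T L : Subgroup Γ) : Submonoid Γ where
  carrier := {u | u ∈ T ⊓ L ∧ (∀ x ∈ B ⊓ T, u * x * u⁻¹ ∈ B) ∧ ∀ y ∈ B ⊓ L, u⁻¹ * y * u ∈ B}
  one_mem' := ⟨one_mem _, fun x hx => by simpa using hx.1, fun y hy => by simpa using hy.1⟩
  mul_mem' := by
    rintro u v ⟨hu, huT, huL⟩ ⟨hv, hvT, hvL⟩
    refine ⟨mul_mem hu hv, fun x hx => ?_, fun y hy => ?_⟩
    · have := huT _ ⟨hvT x hx, mul_mem (mul_mem hv.1 hx.2) (T.inv_mem hv.1)⟩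
      simpa only [mul_assoc, mul_inv_rev] using this
    · have := hvL _ ⟨huL y hy, mul_mem (mul_mem (L.inv_mem hu.2) hy.2) hu.2⟩
      simpa only [mul_assoc, mul_inv_rev] using this

/-- The Iwahori factorization of `B` with respect to the opposite subgroups `T` and `L`. -/
def HasIwahoriFactorization (B T L : Subgroup Γ) : Prop :=
  ∀ b ∈ B, ∃ x ∈ B ⊓ T, ∃ y ∈ B ⊓ L, x * y = b

lemma mul_singleton_mul_mul_singleton_mul
    (hB : HasIwahoriFactorization B T L)
    (hu : u ∈ positiveSubmonoid B T L) (hv : v ∈ positiveSubmonoid B T L) :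
    (B : Set Γ) * {u} * B * {v} * B = (B : Set Γ) * {u * v} * B := by
  apply Set.Subset.antisymm
  · rintro _ ⟨_, ⟨_, ⟨_, ⟨b, hb, u, rfl, rfl⟩, c, hc, rfl⟩, v, rfl, rfl⟩, d, hd, rfl⟩
    obtain ⟨x, hx, y, hy, rfl⟩ := hB c hc
    refine ⟨_, ⟨b * (u * x * u⁻¹), mul_mem hb (hu.2.1 x hx), _, rfl, rfl⟩,
      v⁻¹ * y * v * d, mul_mem (hv.2.2 y hy) hd, ?_⟩
    simp only [mul_assoc, inv_mul_cancel_left, mul_inv_cancel_left]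
  · rintro _ ⟨_, ⟨b, hb, _, rfl, rfl⟩, d, hd, rfl⟩
    refine ⟨_, ⟨_, ⟨_, ⟨b, hb, u, rfl, rfl⟩, 1, B.one_mem, rfl⟩, v, rfl, rfl⟩, d, hd, ?_⟩
    simp only [mul_assoc, one_mul]

lemma image_mk_mul_singleton_mul (hB : HasIwahoriFactorization B T L)
    (hu : u ∈ positiveSubmonoid B T L) :
    (QuotientGroup.mk '' ((B : Set Γ) * {u} * B) : Set (Γ ⧸ B)) =
      MulAction.orbit ↥(B ⊓ T) (u : Γ ⧸ B) := by
  ext q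
  constructor
  · rintro ⟨_, ⟨_, ⟨b, hb, u, rfl, rfl⟩, c, hc, rfl⟩, rfl⟩
    obtain ⟨x, hx, y, hy, rfl⟩ := hB b hb
    refine ⟨⟨x, hx⟩, QuotientGroup.eq.2 ?_⟩
    have : u⁻¹ * y * u * c ∈ B := mul_mem (hu.2.2 y hy) hc
    simpa [mul_assoc, Subgroup.smul_def] using this
  · rintro ⟨x, rfl⟩
    exact ⟨x * u, ⟨_, ⟨x, x.2.1, u, rfl, rfl⟩, 1, one_mem B, mul_one _⟩, rfl⟩

lemma mem_conj_smul_iff {H : Subgroup Γ} {x : Γ} :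
    x ∈ MulAut.conj u • H ↔ u⁻¹ * x * u ∈ H := by
  simp [Subgroup.mem_pointwise_smul_iff_inv_smul_mem, ← map_inv, MulAut.smul_def]

lemma stabilizer_mk_eq (hu : u ∈ positiveSubmonoid B T L) :
    MulAction.stabilizer ↥(B ⊓ T) (u : Γ ⧸ B) =
      (MulAut.conj u • (B ⊓ T)).subgroupOf (B ⊓ T) := by
  ext x
  have hT : u⁻¹ * x * u ∈ T := mul_mem (mul_mem (T.inv_mem hu.1.1) x.2.2) hu.1.1
  rw [MulAction.mem_stabilizer_iff, eq_comm, Subgroup.mem_subgroupOf, mem_conj_smul_iff,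
    Subgroup.mem_inf, and_iff_left hT, mul_assoc]
  exact QuotientGroup.eq

lemma conj_smul_inf_le (hu : u ∈ positiveSubmonoid B T L) :
    MulAut.conj u • (B ⊓ T) ≤ B ⊓ T := by
  intro x hx
  have h := mem_conj_smul_iff.1 hx
  have hx' : x = u * (u⁻¹ * x * u) * u⁻¹ := by group
  rw [hx']
  exact ⟨hu.2.1 _ h, mul_mem (mul_mem hu.1.1 h.2) (T.inv_mem hu.1.1)⟩

lemma ncard_image_mk_mul_singleton_mul
    (hB : HasIwahoriFactorization B T L) (hu : u ∈ positiveSubmonoid B T L) :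
    (QuotientGroup.mk '' ((B : Set Γ) * {u} * B) : Set (Γ ⧸ B)).ncard =
      (MulAut.conj u • (B ⊓ T)).relIndex (B ⊓ T) := by
  rw [image_mk_mul_singleton_mul hB hu, ← MulAction.index_stabilizer, stabilizer_mk_eq hu,
    Subgroup.relIndex]

lemma relIndex_conj_mul_smul (hu : u ∈ positiveSubmonoid B T L)
    (hv : v ∈ positiveSubmonoid B T L) :
    (MulAut.conj (u * v) • (B ⊓ T)).relIndex (B ⊓ T) =
      (MulAut.conj u • (B ⊓ T)).relIndex (B ⊓ T) * (MulAut.conj v • (B ⊓ T)).relIndex (B ⊓ T) := by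
  have hle : MulAut.conj (u * v) • (B ⊓ T) ≤ MulAut.conj u • (B ⊓ T) := by
    rw [map_mul, mul_smul]
    exact Subgroup.pointwise_smul_le_pointwise_smul_iff.2 (conj_smul_inf_le hv)
  rw [← Subgroup.relIndex_mul_relIndex _ _ _ hle (conj_smul_inf_le hu), mul_comm, map_mul,
    mul_smul, Subgroup.relIndex_pointwise_smul]

end Hecke

section Iwahori

variable {K : Type*} [NormedField K] {r : ℝ} {a b : K}

lemma norm_mul_le_of_norm_le_one_left (ha : ‖a‖ ≤ 1) (hb : ‖b‖ ≤ r) : ‖a * b‖ ≤ r := by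
  rw [norm_mul]
  exact (mul_le_of_le_one_left (norm_nonneg b) ha).trans hb

lemma norm_mul_le_of_norm_le_one_right (ha : ‖a‖ ≤ r) (hb : ‖b‖ ≤ 1) : ‖a * b‖ ≤ r :=
  mul_comm a b ▸ norm_mul_le_of_norm_le_one_left hb ha

variable {ι : Type*} [LinearOrder ι] {A A' : Matrix ι ι K}

/-- The Iwahori condition of radius `r`: the matrix is integral and its entries below the diagonal
lie in the ball of radius `r`. -/
structure IsIwahori (r : ℝ) (A : Matrix ι ι K) : Prop where
  integral : ∀ i j, ‖A i j‖ ≤ 1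
  lower : ∀ i j, j < i → ‖A i j‖ ≤ r

namespace IsIwahori

lemma mono (hA : IsIwahori r A) (h : ∀ i j, ‖A' i j‖ ≤ ‖A i j‖) : IsIwahori r A' where
  integral i j := (h i j).trans (hA.integral i j)
  lower i j hij := (h i j).trans (hA.lower i j hij)

lemma of_isUpperTriangular (hr : 0 ≤ r) (hA : A.IsUpperTriangular) (h : ∀ i j, ‖A i j‖ ≤ 1) :
    IsIwahori r A where
  integral := h
  lower i j hij := by rwa [hA hij, norm_zero]

lemma one (hr : 0 ≤ r) : IsIwahori r (1 : Matrix ι ι K) :=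
  of_isUpperTriangular hr Matrix.blockTriangular_one fun i j => by
    rcases eq_or_ne i j with rfl | h <;> simp [*]

end IsIwahori

/-- The Schur complement of the last diagonal entry of a matrix. -/
def schurLast {K : Type*} [Field K] {k : ℕ} (A : Matrix (Fin (k + 1)) (Fin (k + 1)) K) :
    Matrix (Fin k) (Fin k) K :=
  .of fun i j => A i.castSucc j.castSucc -
    A i.castSucc (Fin.last k) * (A (Fin.last k) (Fin.last k))⁻¹ * A (Fin.last k) j.castSucc

lemma exists_isLowerTriangular_mul_of_schurLast {K : Type*} [Field K] {k : ℕ}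
    {A : Matrix (Fin (k + 1)) (Fin (k + 1)) K} (hd : A (Fin.last k) (Fin.last k) ≠ 0)
    {M : Matrix (Fin k) (Fin k) K} (hM : M.IsLowerTriangular) :
    ∃ N : Matrix (Fin (k + 1)) (Fin (k + 1)) K, N.IsLowerTriangular ∧
      (∀ i j, (A * N) (Fin.castSucc i) (Fin.castSucc j) = (schurLast A * M) i j) ∧
      (∀ i, (A * N) (Fin.castSucc i) (Fin.last k) =
        A i.castSucc (Fin.last k) * (A (Fin.last k) (Fin.last k))⁻¹) ∧
      (∀ j, (A * N) (Fin.last k) (Fin.castSucc j) = 0) ∧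
      (A * N) (Fin.last k) (Fin.last k) = 1 := by
  set d := A (Fin.last k) (Fin.last k)
  let N : Matrix (Fin (k + 1)) (Fin (k + 1)) K := .of fun i => Fin.lastCases
    (Fin.lastCases d⁻¹ fun j => -(d⁻¹ * ∑ l, A (Fin.last k) (Fin.castSucc l) * M l j))
    (fun i => Fin.lastCases 0 (M i)) i
  refine ⟨N, fun i j hij => ?_, fun i j => ?_, fun i => ?_, fun j => ?_, ?_⟩
  · replace hij : i < j := hij
    cases j using Fin.lastCases with
    | last =>
      obtain ⟨i, rfl⟩ := Fin.exists_castSucc_eq.2 hij.ne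
      simp [N]
    | cast j =>
      obtain ⟨i, rfl⟩ := Fin.exists_castSucc_eq.2 (hij.trans (Fin.castSucc_lt_last j)).ne
      simpa [N] using hM (Fin.castSucc_lt_castSucc_iff.1 hij)
  · simp [N, Matrix.mul_apply, Fin.sum_univ_castSucc, schurLast, sub_mul, Finset.sum_sub_distrib,
      Finset.mul_sum, mul_assoc, ← sub_eq_add_neg, d]
  · simp [N, Matrix.mul_apply, Fin.sum_univ_castSucc]
  · simp [N, Matrix.mul_apply, Fin.sum_univ_castSucc, d, hd]
  · simp [N, Matrix.mul_apply, Fin.sum_univ_castSucc, d, hd]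

lemma norm_schurLast_sub_le {k : ℕ} {A : Matrix (Fin (k + 1)) (Fin (k + 1)) K}
    (hA : IsIwahori r A) (hd : ‖A (Fin.last k) (Fin.last k)‖ = 1) (i j : Fin k) :
    ‖A i.castSucc j.castSucc - schurLast A i j‖ ≤ r := by
  rw [schurLast, Matrix.of_apply, sub_sub_cancel]
  refine norm_mul_le_of_norm_le_one_left (norm_mul_le_of_norm_le_one_left (hA.integral _ _) ?_)
    (hA.lower _ _ (Fin.castSucc_lt_last j))
  rw [norm_inv, hd, inv_one]

variable [IsUltrametricDist K]

lemma norm_add_le_of_norm_le (ha : ‖a‖ ≤ r) (hb : ‖b‖ ≤ r) : ‖a + b‖ ≤ r :=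
  (IsUltrametricDist.norm_add_le_max a b).trans (max_le ha hb)

lemma norm_sub_le_of_norm_le (ha : ‖a‖ ≤ r) (hb : ‖b‖ ≤ r) : ‖a - b‖ ≤ r := by
  rw [sub_eq_add_neg]
  exact norm_add_le_of_norm_le ha (norm_neg b ▸ hb)

lemma norm_mul_sub_one_le (hb1 : ‖b‖ ≤ 1) (ha : ‖a - 1‖ ≤ r) (hb : ‖b - 1‖ ≤ r) :
    ‖a * b - 1‖ ≤ r := by
  have h : a * b - 1 = (a - 1) * b + (b - 1) := by ring
  rw [h]
  exact norm_add_le_of_norm_le (norm_mul_le_of_norm_le_one_right ha hb1) hb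

lemma norm_sub_one_le_of_mul (hb1 : ‖b‖ ≤ 1) (hab : ‖a * b - 1‖ ≤ r) (ha : ‖a - 1‖ ≤ r) :
    ‖b - 1‖ ≤ r := by
  have h : b - 1 = (a * b - 1) - (a - 1) * b := by ring
  rw [h]
  exact norm_sub_le_of_norm_le hab (norm_mul_le_of_norm_le_one_right ha hb1)

lemma norm_eq_one_of_norm_sub_lt_one (hab : ‖a - b‖ < 1) (hb : ‖b‖ = 1) : ‖a‖ = 1 := by
  rw [← sub_add_cancel a b, IsUltrametricDist.norm_add_eq_max_of_norm_ne_norm (by linarith), hb,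
    max_eq_right hab.le]

namespace IsIwahori

variable [Fintype ι]

lemma mul (hr : 0 ≤ r) (hA : IsIwahori r A) (hA' : IsIwahori r A') : IsIwahori r (A * A') where
  integral i j := IsUltrametricDist.norm_sum_le_of_forall_le_of_nonneg zero_le_one fun l _ =>
    norm_mul_le_of_norm_le_one_left (hA.integral i l) (hA'.integral l j)
  lower i j hij := by
    refine IsUltrametricDist.norm_sum_le_of_forall_le_of_nonneg hr fun l _ => ?_
    rcases lt_or_ge l i with hl | hl
    · exact norm_mul_le_of_norm_le_one_right (hA.lower i l hl) (hA'.integral l j)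
    · exact norm_mul_le_of_norm_le_one_left (hA.integral i l) (hA'.lower l j (hij.trans_le hl))

lemma norm_mul_apply_self_sub_le (hr : 0 ≤ r) (hA : IsIwahori r A) (hA' : IsIwahori r A') (i : ι) :
    ‖(A * A') i i - A i i * A' i i‖ ≤ r := by
  rw [Matrix.mul_apply, ← Finset.add_sum_erase _ _ (Finset.mem_univ i), add_sub_cancel_left]
  refine IsUltrametricDist.norm_sum_le_of_forall_le_of_nonneg hr fun l hl => ?_
  rcases (Finset.ne_of_mem_erase hl).lt_or_gt with hl | hl
  · exact norm_mul_le_of_norm_le_one_right (hA.lower i l hl) (hA'.integral l i)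
  · exact norm_mul_le_of_norm_le_one_left (hA.integral i l) (hA'.lower l i hl)

lemma norm_apply_self_eq_one (hr : 0 ≤ r) (hr1 : r < 1) (hA : IsIwahori r A)
    (hA' : IsIwahori r A') (h : A * A' = 1) (i : ι) : ‖A i i‖ = 1 := by
  have hmul : ‖A i i * A' i i‖ = 1 := by
    refine norm_eq_one_of_norm_sub_lt_one (b := 1) ?_ norm_one
    have := norm_mul_apply_self_sub_le hr hA hA' i
    rw [h, Matrix.one_apply_eq, norm_sub_rev] at this
    exact this.trans_lt hr1
  refine le_antisymm (hA.integral i i) ?_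
  rw [norm_mul] at hmul
  exact hmul.ge.trans (mul_le_of_le_one_right (norm_nonneg _) (hA'.integral i i))

end IsIwahori

lemma isIwahori_schurLast (hr1 : r ≤ 1) {k : ℕ} {A : Matrix (Fin (k + 1)) (Fin (k + 1)) K}
    (hA : IsIwahori r A) (hd : ‖A (Fin.last k) (Fin.last k)‖ = 1) :
    IsIwahori r (schurLast A) := by
  have h := norm_schurLast_sub_le hA hd
  constructor
  · intro i j
    rw [← sub_sub_cancel (A i.castSucc j.castSucc) (schurLast A i j)]
    exact norm_sub_le_of_norm_le (hA.integral _ _) ((h i j).trans hr1)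
  · intro i j hij
    rw [← sub_sub_cancel (A i.castSucc j.castSucc) (schurLast A i j)]
    exact norm_sub_le_of_norm_le (hA.lower _ _ (Fin.castSucc_lt_castSucc_iff.2 hij)) (h i j)

-- Column elimination, pivoting on the last diagonal entry: the Schur complement satisfies the
-- hypotheses again.
lemma IsIwahori.exists_isLowerTriangular_mul (hr1 : r < 1) {k : ℕ} {A : Matrix (Fin k) (Fin k) K}
    (hA : IsIwahori r A) (hdiag : ∀ i, ‖A i i‖ = 1) :
    ∃ M : Matrix (Fin k) (Fin k) K, M.IsLowerTriangular ∧ (A * M).IsUpperTriangular ∧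
      (∀ i, (A * M) i i = 1) ∧ ∀ i j, ‖(A * M) i j‖ ≤ 1 := by
  induction k with
  | zero => exact ⟨1, Matrix.blockTriangular_one, fun i => i.elim0, fun i => i.elim0,
      fun i => i.elim0⟩
  | succ k ih =>
    have hd := hdiag (Fin.last k)
    have hS_diag (i : Fin k) : ‖schurLast A i i‖ = 1 :=
      norm_eq_one_of_norm_sub_lt_one
        (norm_sub_rev (A i.castSucc i.castSucc) _ ▸ (norm_schurLast_sub_le hA hd i i).trans_lt hr1)
        (hdiag i.castSucc)
    obtain ⟨M, hM, hup, hone, hint⟩ := ih (isIwahori_schurLast hr1.le hA hd) hS_diag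
    obtain ⟨N, hN, hcc, hcl, hlc, hll⟩ :=
      exists_isLowerTriangular_mul_of_schurLast (norm_ne_zero_iff.1 (hd ▸ one_ne_zero)) hM
    refine ⟨N, hN, fun i j hij => ?_, fun i => ?_, fun i j => ?_⟩
    · obtain ⟨j, rfl⟩ := Fin.exists_castSucc_eq.2 (hij.trans_le (Fin.le_last i)).ne
      cases i using Fin.lastCases with
      | last => exact hlc j
      | cast i => exact (hcc i j).trans (hup hij)
    · cases i using Fin.lastCases with
      | last => exact hll
      | cast i => exact (hcc i i).trans (hone i)
    · cases i using Fin.lastCases <;> cases j using Fin.lastCases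
      · simp [hll]
      · simp [hlc]
      · simpa [hcl, hd] using hA.integral _ _
      · simpa [hcc] using hint _ _

end Iwahori

section Similitude

variable {R : Type*} [CommRing R] {k : ℕ} {ε : Fin k → ℤˣ} {A B : Matrix (Fin k) (Fin k) R}
  {μ ν : R}

/-- The adjoint of `A` for the bilinear form whose only nonzero values on basis vectors are
`⟪e i, e i.rev⟫ = ε i`. It swaps entries across the antidiagonal, up to signs. -/
def formAdjoint (ε : Fin k → ℤˣ) (A : Matrix (Fin k) (Fin k) R) : Matrix (Fin k) (Fin k) R :=
  .of fun i j => (ε i.rev * ε j.rev : ℤˣ) • A j.rev i.rev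

lemma formAdjoint_apply_self (i : Fin k) : formAdjoint ε A i i = A i.rev i.rev := by
  simp [formAdjoint]

lemma formAdjoint_one : formAdjoint ε (1 : Matrix (Fin k) (Fin k) R) = 1 := by
  ext i j
  rcases eq_or_ne i j with rfl | h
  · simp only [formAdjoint_apply_self, Matrix.one_apply_eq]
  · simp [formAdjoint, Matrix.one_apply, h, h.symm]

lemma formAdjoint_mul : formAdjoint ε (A * B) = formAdjoint ε B * formAdjoint ε A := by
  ext i j
  simp only [formAdjoint, Matrix.of_apply, Matrix.mul_apply]
  rw [← Equiv.sum_comp Fin.revPerm, Finset.smul_sum]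
  refine Finset.sum_congr rfl fun l _ => ?_
  have hε : ε i.rev * ε l.rev * (ε l.rev * ε j.rev) = ε i.rev * ε j.rev := by
    rw [mul_assoc, ← mul_assoc (ε l.rev), Int.units_mul_self, one_mul]
  rw [smul_mul_smul_comm, hε, Fin.revPerm_apply, mul_comm (A _ _)]

lemma formAdjoint_diagonal (t : Fin k → R) :
    formAdjoint ε (Matrix.diagonal t) = Matrix.diagonal (t ∘ Fin.rev) := by
  ext i j
  rcases eq_or_ne i j with rfl | h
  · simp only [formAdjoint_apply_self, Matrix.diagonal_apply_eq, Function.comp_apply]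
  · simp [formAdjoint, Matrix.diagonal_apply, h, h.symm]

lemma mul_apply_self_of_isUpperTriangular (hA : A.IsUpperTriangular) (hB : B.IsUpperTriangular)
    (i : Fin k) : (A * B) i i = A i i * B i i := by
  rw [Matrix.mul_apply]
  refine Finset.sum_eq_single i (fun j _ hj => ?_) fun h => (h (Finset.mem_univ i)).elim
  rcases hj.lt_or_gt with h | h
  · rw [hA h, zero_mul]
  · rw [hB h, mul_zero]

lemma isUpperTriangular_formAdjoint (hA : A.IsUpperTriangular) :
    (formAdjoint ε A).IsUpperTriangular := fun i j hij => by
  have h : A j.rev i.rev = 0 := hA (Fin.rev_lt_rev.2 hij)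
  rw [formAdjoint, Matrix.of_apply, h, smul_zero]

lemma isLowerTriangular_formAdjoint (hA : A.IsLowerTriangular) :
    (formAdjoint ε A).IsLowerTriangular := fun i j hij => by
  have h : A j.rev i.rev = 0 := hA (Fin.rev_lt_rev.2 hij)
  rw [formAdjoint, Matrix.of_apply, h, smul_zero]

/-- `A` is a similitude with multiplier `ν` of the form defining `formAdjoint ε`. -/
def IsSimilitude (ε : Fin k → ℤˣ) (A : Matrix (Fin k) (Fin k) R) (ν : R) : Prop :=
  formAdjoint ε A * A = ν • (1 : Matrix (Fin k) (Fin k) R)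

namespace IsSimilitude

lemma one : IsSimilitude ε (1 : Matrix (Fin k) (Fin k) R) 1 := by
  simp [IsSimilitude, formAdjoint_one]

lemma mul (hA : IsSimilitude ε A μ) (hB : IsSimilitude ε B ν) :
    IsSimilitude ε (A * B) (μ * ν) := by
  calc formAdjoint ε (A * B) * (A * B)
      = formAdjoint ε B * (formAdjoint ε A * A) * B := by
        rw [formAdjoint_mul]; simp only [mul_assoc]
    _ = (μ * ν) • (1 : Matrix (Fin k) (Fin k) R) := by
        rw [hA, mul_smul_one, smul_mul_assoc, hB, smul_smul]

lemma formAdjoint_eq_smul (hA : IsSimilitude ε A ν) (hAB : A * B = 1) :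
    formAdjoint ε A = ν • B := by
  rw [← mul_one (formAdjoint ε A), ← hAB, ← mul_assoc, hA, smul_one_mul]

lemma of_mul_eq_one (hA : IsSimilitude ε A ν) (hAB : A * B = 1) (hμ : μ * ν = 1) :
    IsSimilitude ε B μ := by
  have h : ν • (formAdjoint ε B * B) = 1 := by
    rw [← mul_smul_comm, ← hA.formAdjoint_eq_smul hAB, ← formAdjoint_mul, hAB, formAdjoint_one]
  rw [IsSimilitude, ← one_smul R (formAdjoint ε B * B), ← hμ, mul_smul, h]

lemma diagonal {t : Fin k → R} (ht : ∀ i, t i.rev * t i = ν) :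
    IsSimilitude ε (Matrix.diagonal t) ν := by
  simp [IsSimilitude, formAdjoint_diagonal, ht, Matrix.smul_one_eq_diagonal]

/- `U = A * M` has `formAdjoint ε U * U = ν • (formAdjoint ε M * M)`, which is at once upper
unitriangular and lower triangular. -/
lemma mul_isLowerTriangular (hA : IsSimilitude ε A ν) {M : Matrix (Fin k) (Fin k) R}
    (hM : M.IsLowerTriangular) (hup : (A * M).IsUpperTriangular) (hone : ∀ i, (A * M) i i = 1) :
    IsSimilitude ε (A * M) 1 := by
  set X := formAdjoint ε (A * M) * (A * M) with hX
  have hXν : X = ν • (formAdjoint ε M * M) := by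
    rw [hX, formAdjoint_mul, mul_assoc, ← mul_assoc _ A, hA, smul_one_mul, mul_smul_comm]
  have hX_up : X.IsUpperTriangular := (isUpperTriangular_formAdjoint hup).mul hup
  have hX_low : X.IsLowerTriangular := by
    intro i j hij
    rw [hXν, Matrix.smul_apply, (isLowerTriangular_formAdjoint hM).mul hM hij, smul_zero]
  have hX_diag (i : Fin k) : X i i = 1 := by
    rw [hX, mul_apply_self_of_isUpperTriangular (isUpperTriangular_formAdjoint hup) hup,
      formAdjoint_apply_self, hone, hone, one_mul]
  rw [IsSimilitude, ← hX, one_smul]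
  ext i j
  rcases lt_trichotomy i j with h | rfl | h
  · rw [hX_low h, Matrix.one_apply_ne h.ne]
  · rw [hX_diag, Matrix.one_apply_eq]
  · rw [hX_up h, Matrix.one_apply_ne h.ne']

end IsSimilitude

section Norm

variable {K : Type*} [NormedField K] {A B : Matrix (Fin k) (Fin k) K} {ν : K} {r : ℝ}

lemma norm_formAdjoint_apply (i j : Fin k) : ‖formAdjoint ε A i j‖ = ‖A j.rev i.rev‖ := by
  rcases Int.units_eq_one_or (ε i.rev * ε j.rev) with h | h <;> simp [formAdjoint, h]

lemma IsSimilitude.isIwahori_of_mul_eq_one (hA : IsSimilitude ε A ν) (hν : ‖ν‖ = 1)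
    (hAB : A * B = 1) (h : IsIwahori r A) : IsIwahori r B := by
  have hB (i j : Fin k) : ‖B i j‖ = ‖A j.rev i.rev‖ := by
    rw [← norm_formAdjoint_apply (ε := ε), hA.formAdjoint_eq_smul hAB, Matrix.smul_apply,
      norm_smul, hν, one_mul]
  exact ⟨fun i j => hB i j ▸ h.integral _ _,
    fun i j hij => hB i j ▸ h.lower _ _ (Fin.rev_lt_rev.2 hij)⟩

end Norm

end Similitude

section Torus

variable {K : Type*} {k : ℕ}

/-- The subgroup of invertible matrices that, together with their inverse, are block triangular
for `b`. -/
def blockTriangularSubgroup (R : Type*) [CommRing R] {α : Type*} [LinearOrder α] (b : Fin k → α) :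
    Subgroup (GL (Fin k) R) :=
  (Matrix.blockTriangularSubsemiring R b).toSubmonoid.units

lemma mem_blockTriangularSubgroup {R : Type*} [CommRing R] {α : Type*} [LinearOrder α]
    {b : Fin k → α} {g : GL (Fin k) R} :
    g ∈ blockTriangularSubgroup R b ↔ g.val.BlockTriangular b := by
  refine ⟨And.left, fun hg => ⟨hg, ?_⟩⟩
  let _ := g.invertible
  have := Matrix.blockTriangular_inv_of_blockTriangular hg
  rwa [← Matrix.coe_units_inv] at this

/-- The homomorphism from the diagonal torus to `GL`. -/
def diagonalGL [CommRing K] : (Fin k → Kˣ) →* GL (Fin k) K :=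
  (Units.map (Matrix.diagonalRingHom (Fin k) K).toMonoidHom).comp
    MulEquiv.piUnits.symm.toMonoidHom

lemma coe_diagonalGL [CommRing K] (t : Fin k → Kˣ) :
    (diagonalGL t).val = Matrix.diagonal fun i => (t i : K) := rfl

lemma diagonalGL_mem_blockTriangularSubgroup [CommRing K] {α : Type*} [LinearOrder α]
    (b : Fin k → α) (t : Fin k → Kˣ) : diagonalGL t ∈ blockTriangularSubgroup K b :=
  mem_blockTriangularSubgroup.2 (Matrix.blockTriangular_diagonal _)

lemma conj_diagonalGL_apply [CommRing K] (t : Fin k → Kˣ) (A : GL (Fin k) K) (i j : Fin k) :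
    (diagonalGL t * A * (diagonalGL t)⁻¹).val i j = t i * A.val i j * (t j)⁻¹ := by
  rw [← map_inv, Units.val_mul, Units.val_mul, coe_diagonalGL, coe_diagonalGL,
    Matrix.mul_diagonal, Matrix.diagonal_mul, Pi.inv_apply]

variable [NormedField K] {r : ℝ} {t : Fin k → Kˣ} {A : GL (Fin k) K}

lemma norm_conj_diagonalGL_apply_le {i j : Fin k} (h : ‖(t i : K)‖ ≤ ‖(t j : K)‖) :
    ‖(diagonalGL t * A * (diagonalGL t)⁻¹).val i j‖ ≤ ‖A.val i j‖ := by
  have hj : 0 < ‖(t j : K)‖ := norm_pos_iff.2 (t j).ne_zero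
  rw [conj_diagonalGL_apply, mul_right_comm, norm_mul, norm_mul, Units.val_inv_eq_inv_val, norm_inv,
    ← div_eq_mul_inv]
  exact mul_le_of_le_one_left (norm_nonneg _) ((div_le_one hj).2 h)

lemma IsIwahori.conj_diagonalGL_of_isUpperTriangular (hA : IsIwahori r A.val)
    (hup : A.val.IsUpperTriangular) (ht : Monotone fun i => ‖(t i : K)‖) :
    IsIwahori r (diagonalGL t * A * (diagonalGL t)⁻¹).val := by
  refine hA.mono fun i j => ?_
  rcases le_or_gt i j with hij | hij
  · exact norm_conj_diagonalGL_apply_le (ht hij)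
  · simp [conj_diagonalGL_apply, hup hij]

lemma IsIwahori.conj_diagonalGL_of_isLowerTriangular (hA : IsIwahori r A.val)
    (hlow : A.val.IsLowerTriangular) (ht : Antitone fun i => ‖(t i : K)‖) :
    IsIwahori r (diagonalGL t * A * (diagonalGL t)⁻¹).val := by
  refine hA.mono fun i j => ?_
  rcases le_or_gt j i with hij | hij
  · exact norm_conj_diagonalGL_apply_le (ht hij)
  · have : A.val i j = 0 := hlow hij
    simp [conj_diagonalGL_apply, this]

lemma exists_isIwahori_conj_diagonalGL (hr : 0 < r) (hr1 : r ≤ 1) (t : Fin k → Kˣ) :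
    ∃ δ > 0, ∀ A : GL (Fin k) K, IsIwahori r A.val → (∀ i j, ‖(A.val - 1) i j‖ ≤ δ) →
      IsIwahori r (diagonalGL t * A * (diagonalGL t)⁻¹).val := by
  obtain ⟨C, hC⟩ := Finite.exists_le fun ij : Fin k × Fin k => ‖(t ij.1 : K)‖ * ‖(t ij.2 : K)‖⁻¹
  have hC1 : 0 < max C 1 := lt_max_of_lt_right one_pos
  refine ⟨r / max C 1, div_pos hr hC1, fun A hA hA1 => ?_⟩
  have hoff (i j : Fin k) (hij : i ≠ j) :
      ‖(diagonalGL t * A * (diagonalGL t)⁻¹).val i j‖ ≤ r := by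
    have h1 : ‖A.val i j‖ ≤ r / max C 1 := by
      simpa only [Matrix.sub_apply, Matrix.one_apply_ne hij, sub_zero] using hA1 i j
    rw [conj_diagonalGL_apply, mul_right_comm, norm_mul, norm_mul, Units.val_inv_eq_inv_val,
      norm_inv]
    calc ‖(t i : K)‖ * ‖(t j : K)‖⁻¹ * ‖A.val i j‖
        ≤ max C 1 * (r / max C 1) := by gcongr; exact (hC (i, j)).trans (le_max_left _ _)
      _ = r := mul_div_cancel₀ r hC1.ne'
  refine ⟨fun i j => ?_, fun i j hij => hoff i j hij.ne'⟩
  rcases eq_or_ne i j with rfl | hij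
  · exact (norm_conj_diagonalGL_apply_le le_rfl).trans (hA.integral i i)
  · exact (hoff i j hij).trans hr1

end Torus

section Determinant

variable {R : Type*} [CommRing R] {k : ℕ} {ε : Fin k → ℤˣ} {A : Matrix (Fin k) (Fin k) R} {ν : R}

lemma det_formAdjoint : (formAdjoint ε A).det = A.det := by
  let D : Matrix (Fin k) (Fin k) R := Matrix.diagonal fun i => ((ε i.rev : ℤ) : R)
  have hD : D * D = 1 := by
    simp [D, Matrix.diagonal_mul_diagonal, ← Int.cast_mul, ← Units.val_mul, Int.units_mul_self]
  have h : formAdjoint ε A = D * A.transpose.submatrix Fin.revPerm Fin.revPerm * D := by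
    ext i j
    simp [D, formAdjoint, Units.smul_def, mul_right_comm]
  rw [h, Matrix.det_mul_right_comm, hD, one_mul, Matrix.det_submatrix_equiv_self,
    Matrix.det_transpose]

lemma IsSimilitude.det_mul_self (hA : IsSimilitude ε A ν) : A.det * A.det = ν ^ k := by
  simpa [det_formAdjoint] using congrArg Matrix.det hA

end Determinant

section FiniteIndex

lemma relIndex_ne_zero_of_totallyBounded {Γ E : Type*} [Group Γ] [PseudoMetricSpace E]
    {H K : Subgroup Γ} {f : Γ → E} (hf : TotallyBounded (f '' K)) {δ : ℝ} (hδ : 0 < δ)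
    (h : ∀ x ∈ K, ∀ y ∈ K, dist (f x) (f y) < δ → x⁻¹ * y ∈ H) : H.relIndex K ≠ 0 := by
  obtain ⟨s, hs, hcover⟩ := Metric.totallyBounded_iff.1 hf (δ / 2) (half_pos hδ)
  have hnear (x : K) : ∃ c : s, dist (f x) c < δ / 2 := by
    obtain ⟨c, hc, hxc⟩ := Set.mem_iUnion₂.1 (hcover ⟨x, x.2, rfl⟩)
    exact ⟨⟨c, hc⟩, hxc⟩
  choose c hc using hnear
  have hc_inj : Function.Injective fun q : K ⧸ H.subgroupOf K => c q.out := by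
    intro q q' (hqq' : c q.out = c q'.out)
    have hclose : dist (f q.out) (f q'.out) < δ := by
      calc dist (f q.out) (f q'.out) ≤ dist (f q.out) (c q.out) + dist (f q'.out) (c q.out) :=
            dist_triangle_right _ _ _
        _ < δ / 2 + δ / 2 := add_lt_add (hc _) (hqq' ▸ hc q'.out)
        _ = δ := add_halves δ
    rw [← q.out_eq, ← q'.out_eq]
    exact QuotientGroup.eq.2 (h _ q.out.2 _ q'.out.2 hclose)
  have := hs.to_subtype
  have : Finite (K ⧸ H.subgroupOf K) := Finite.of_injective _ hc_inj
  exact Subgroup.index_ne_zero_of_finite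

lemma norm_inv_mul_sub_one_apply_le {K : Type*} [NormedField K] [IsUltrametricDist K] {k : ℕ}
    {A B : GL (Fin k) K} {δ : ℝ} (hδ : 0 ≤ δ) (hA : ∀ i j, ‖A⁻¹.val i j‖ ≤ 1)
    (hAB : ∀ i j, ‖A.val i j - B.val i j‖ ≤ δ) (i j : Fin k) :
    ‖((A⁻¹ * B).val - 1) i j‖ ≤ δ := by
  have h : (A⁻¹ * B).val - 1 = A⁻¹.val * (B.val - A.val) := by
    rw [mul_sub, Units.inv_mul, Units.val_mul]
  rw [h, Matrix.mul_apply]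
  refine IsUltrametricDist.norm_sum_le_of_forall_le_of_nonneg hδ fun l _ => ?_
  exact norm_mul_le_of_norm_le_one_left (hA i l) (norm_sub_rev (A.val l j) _ ▸ hAB l j)

end FiniteIndex

section Factorization

variable {K : Type*} [NormedField K] [IsUltrametricDist K] {k : ℕ} {ε : Fin k → ℤˣ} {ν : K}
  {r : ℝ}

lemma IsSimilitude.exists_unitriangular_factor {A : GL (Fin k) K} (hA : IsSimilitude ε A.val ν)
    (hr : 0 ≤ r) (hr1 : r < 1) (h : IsIwahori r A.val) (h' : IsIwahori r A⁻¹.val) :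
    ∃ U ∈ blockTriangularSubgroup K (id : Fin k → Fin k),
      U⁻¹ * A ∈ blockTriangularSubgroup K (OrderDual.toDual : Fin k → (Fin k)ᵒᵈ) ∧
      IsIwahori r U.val ∧ IsSimilitude ε U.val 1 ∧ (∀ i, U.val i i = 1) ∧ U.val.det = 1 := by
  obtain ⟨M, hM, hup, hone, hint⟩ :=
    h.exists_isLowerTriangular_mul hr1 (h.norm_apply_self_eq_one hr hr1 h' A.mul_inv)
  have hdet : (A.val * M).det = 1 := by
    rw [Matrix.det_of_isUpperTriangular hup]
    exact Finset.prod_eq_one fun i _ => hone i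
  let U : GL (Fin k) K := .mkOfDetNeZero (A.val * M) (hdet ▸ one_ne_zero)
  have hAU : (A⁻¹ * U).val = M := A.inv_mul_cancel_left M
  have hlow : (U⁻¹ * A)⁻¹ ∈ blockTriangularSubgroup K OrderDual.toDual := by
    rw [mul_inv_rev, inv_inv]
    exact mem_blockTriangularSubgroup.2 (hAU ▸ hM)
  exact ⟨U, mem_blockTriangularSubgroup.2 hup, inv_mem_iff.1 hlow,
    .of_isUpperTriangular hr hup hint, hA.mul_isLowerTriangular hM hup hone, hone, hdet⟩

end Factorization

section Symplectic

/-- The signs of the alternating form `Jmat`, in the convention of `formAdjoint`. -/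
def sign₄ : Fin 4 → ℤˣ := ![1, 1, -1, -1]

/-- The signs of the standard alternating form in two variables, in the convention of
`formAdjoint`. -/
def sign₂ : Fin 2 → ℤˣ := ![1, -1]

lemma isSimilitude_sign₂ {R : Type*} [CommRing R] (A : Matrix (Fin 2) (Fin 2) R) :
    IsSimilitude sign₂ A A.det := by
  have h : formAdjoint sign₂ A = A.adjugate := by
    ext i j
    fin_cases i <;> fin_cases j <;> simp [formAdjoint, sign₂, Matrix.adjugate_fin_two]
  rw [IsSimilitude, h, Matrix.adjugate_mul]

variable {p : ℕ} [Fact p.Prime]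

lemma Jmat_mul_self : Jmat p * Jmat p = -1 := by
  ext i j
  fin_cases i <;> fin_cases j <;> simp [Jmat, Matrix.mul_apply, Fin.sum_univ_four]

lemma Jmat_mul_formAdjoint (A : Matrix (Fin 4) (Fin 4) ℚ_[p]) :
    Jmat p * formAdjoint sign₄ A = A.transpose * Jmat p := by
  ext i j
  fin_cases i <;> fin_cases j <;>
    simp [formAdjoint, sign₄, Jmat, Matrix.mul_apply, Fin.sum_univ_four]

lemma transpose_mul_Jmat_mul_eq_smul_iff {A : Matrix (Fin 4) (Fin 4) ℚ_[p]} {ν : ℚ_[p]} :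
    A.transpose * Jmat p * A = ν • Jmat p ↔ IsSimilitude sign₄ A ν := by
  have hJ : IsUnit (Jmat p) := .of_mul_eq_one (-Jmat p) (by rw [mul_neg, Jmat_mul_self, neg_neg])
  rw [← Jmat_mul_formAdjoint, mul_assoc, ← mul_smul_one, hJ.mul_right_inj, IsSimilitude]

end Symplectic

section Level

variable (p : ℕ) [Fact p.Prime]

/-- The group of units of `MG p`, in which the Hecke products are computed. -/
abbrev GLPair := GL (Fin 4) ℚ_[p] × GL (Fin 2) ℚ_[p]

/-- The inclusion of the invertible pairs in `MG p`. -/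
def toMG : GLPair p →* MG p := (Units.coeHom _).prodMap (Units.coeHom _)

lemma toMG_injective : Function.Injective (toMG p) :=
  Units.val_injective.prodMap Units.val_injective

variable {p}

/-- The conditions defining `B_{m,n}`, stated with `IsSimilitude` and `IsIwahori`. -/
structure IsLevel (m n : ℕ) (g : GLPair p) : Prop where
  similitude : IsSimilitude sign₄ g.1.val g.2.val.det
  norm_det : ‖g.2.val.det‖ = 1
  iwahori_fst : IsIwahori ((p : ℝ) ^ (-(n : ℤ))) g.1.val
  iwahori_snd : IsIwahori ((p : ℝ) ^ (-(n : ℤ))) g.2.val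
  det_sub_one : ‖g.2.val.det - 1‖ ≤ (p : ℝ) ^ (-(m : ℤ))
  corner_sub_one : ‖g.1.val 3 3 - 1‖ ≤ (p : ℝ) ^ (-(n : ℤ))

variable {m n : ℕ} {g g' : GLPair p}

lemma zpow_neg_natCast_pos : 0 < (p : ℝ) ^ (-(n : ℤ)) :=
  zpow_pos (Nat.cast_pos.2 (Fact.out : p.Prime).pos) _

lemma zpow_neg_natCast_le_one : (p : ℝ) ^ (-(n : ℤ)) ≤ 1 :=
  zpow_le_one_of_nonpos₀ (Nat.one_le_cast.2 (Fact.out : p.Prime).one_le) (by lia)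

lemma zpow_neg_natCast_lt_one (hn : 1 ≤ n) : (p : ℝ) ^ (-(n : ℤ)) < 1 :=
  zpow_lt_one_of_neg₀ (Nat.one_lt_cast.2 (Fact.out : p.Prime).one_lt) (by lia)

lemma toMG_mem_Bmn_iff : toMG p g ∈ Bmn p m n ↔ IsLevel m n g := by
  constructor
  · rintro ⟨⟨h1, h2, -, hdet, hJ⟩, hm, h10, h20, h21, h30, h31, h32, h33, h10'⟩
    refine ⟨transpose_mul_Jmat_mul_eq_smul_iff.1 hJ, hdet, ⟨h1, fun i j hij => ?_⟩,
      ⟨h2, fun i j hij => ?_⟩, hm, h33⟩ <;>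
    fin_cases i <;> fin_cases j <;> first | assumption | exact absurd hij (by decide)
  · intro hg
    have hdet : ‖g.1.val.det‖ = 1 := by
      have h := congrArg norm hg.similitude.det_mul_self
      rw [norm_mul, norm_pow, hg.norm_det, one_pow] at h
      exact (mul_self_eq_one_iff.1 h).resolve_right (by linarith [norm_nonneg g.1.val.det])
    have h1 := hg.iwahori_fst.lower
    exact ⟨⟨hg.iwahori_fst.integral, hg.iwahori_snd.integral, hdet, hg.norm_det,
      transpose_mul_Jmat_mul_eq_smul_iff.2 hg.similitude⟩, hg.det_sub_one,
      h1 1 0 (by decide), h1 2 0 (by decide), h1 2 1 (by decide), h1 3 0 (by decide),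
      h1 3 1 (by decide), h1 3 2 (by decide), hg.corner_sub_one,
      hg.iwahori_snd.lower 1 0 (by decide)⟩

namespace IsLevel

lemma one : IsLevel m n (1 : GLPair p) where
  similitude := by simpa using IsSimilitude.one
  norm_det := by simp
  iwahori_fst := .one zpow_neg_natCast_pos.le
  iwahori_snd := .one zpow_neg_natCast_pos.le
  det_sub_one := by simp
  corner_sub_one := by simp

lemma mul (hg : IsLevel m n g) (hg' : IsLevel m n g') : IsLevel m n (g * g') where
  similitude := by simpa using hg.similitude.mul hg'.similitude
  norm_det := by simp [hg.norm_det, hg'.norm_det]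
  iwahori_fst := hg.iwahori_fst.mul zpow_neg_natCast_pos.le hg'.iwahori_fst
  iwahori_snd := hg.iwahori_snd.mul zpow_neg_natCast_pos.le hg'.iwahori_snd
  det_sub_one := by
    simpa using norm_mul_sub_one_le hg'.norm_det.le hg.det_sub_one hg'.det_sub_one
  corner_sub_one := by
    have h := norm_add_le_of_norm_le
      (hg.iwahori_fst.norm_mul_apply_self_sub_le zpow_neg_natCast_pos.le hg'.iwahori_fst 3)
      (norm_mul_sub_one_le (hg'.iwahori_fst.integral 3 3) hg.corner_sub_one hg'.corner_sub_one)
    rwa [sub_add_sub_cancel] at h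

lemma inv (hg : IsLevel m n g) : IsLevel m n g⁻¹ := by
  have hdet : g⁻¹.2.val.det * g.2.val.det = 1 := by
    rw [← Matrix.det_mul, Prod.snd_inv, Units.inv_mul, Matrix.det_one]
  have hdet_norm : ‖g⁻¹.2.val.det‖ = 1 := by
    simpa only [norm_mul, hg.norm_det, mul_one, norm_one] using congrArg norm hdet
  have hfst := hg.similitude.isIwahori_of_mul_eq_one hg.norm_det g.1.mul_inv hg.iwahori_fst
  refine ⟨hg.similitude.of_mul_eq_one g.1.mul_inv hdet, hdet_norm, hfst,
    (isSimilitude_sign₂ g.2.val).isIwahori_of_mul_eq_one hg.norm_det g.2.mul_inv hg.iwahori_snd,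
    norm_sub_one_le_of_mul (a := g.2.val.det) hdet_norm.le ?_ hg.det_sub_one,
    norm_sub_one_le_of_mul (hfst.integral 3 3) ?_ hg.corner_sub_one⟩
  · rw [mul_comm, hdet, sub_self, norm_zero]
    exact zpow_neg_natCast_pos.le
  · have h := hg.iwahori_fst.norm_mul_apply_self_sub_le zpow_neg_natCast_pos.le hfst 3
    rwa [g.1.mul_inv, Matrix.one_apply_eq, norm_sub_rev] at h

end IsLevel

variable (p m n) in
/-- The group `B_{m,n}` as a subgroup of `GLPair p`. -/
def levelSubgroup : Subgroup (GLPair p) where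
  carrier := {g | IsLevel m n g}
  one_mem' := .one
  mul_mem' := IsLevel.mul
  inv_mem' := .inv

lemma image_toMG_levelSubgroup : toMG p '' levelSubgroup p m n = Bmn p m n := by
  refine Set.Subset.antisymm (Set.image_subset_iff.2 fun _ => toMG_mem_Bmn_iff.2) fun x hx => ?_
  have h1 := hx.1.2.2.1
  have h2 := hx.1.2.2.2.1
  let g : GLPair p := (.mkOfDetNeZero x.1 (norm_ne_zero_iff.1 (h1 ▸ one_ne_zero)),
    .mkOfDetNeZero x.2 (norm_ne_zero_iff.1 (h2 ▸ one_ne_zero)))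
  exact ⟨g, toMG_mem_Bmn_iff.1 hx, rfl⟩

variable (p) in
/-- The pairs in `GLPair p` that are block triangular for `b₁` and `b₂`. With identity orders this
is the upper Borel subgroup, with dual orders the lower one. -/
def blockTriangularPair {α β : Type*} [LinearOrder α] [LinearOrder β] (b₁ : Fin 4 → α)
    (b₂ : Fin 2 → β) : Subgroup (GLPair p) :=
  (blockTriangularSubgroup _ b₁).prod (blockTriangularSubgroup _ b₂)

lemma hasIwahoriFactorization_levelSubgroup (hn : 1 ≤ n) :
    HasIwahoriFactorization (levelSubgroup p m n) (blockTriangularPair p id id)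
      (blockTriangularPair p OrderDual.toDual OrderDual.toDual) := by
  intro g hg
  have hg_inv := IsLevel.inv hg
  obtain ⟨U, hU, hUg, hU_iwahori, hU_sim, hU_diag, -⟩ :=
    hg.similitude.exists_unitriangular_factor zpow_neg_natCast_pos.le (zpow_neg_natCast_lt_one hn)
      hg.iwahori_fst hg_inv.iwahori_fst
  obtain ⟨V, hV, hVg, hV_iwahori, -, -, hV_det⟩ :=
    (isSimilitude_sign₂ g.2.val).exists_unitriangular_factor zpow_neg_natCast_pos.le
      (zpow_neg_natCast_lt_one hn) hg.iwahori_snd hg_inv.iwahori_snd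
  have hUV : IsLevel m n ((U, V) : GLPair p) := by
    refine ⟨hV_det ▸ hU_sim, ?_, hU_iwahori, hV_iwahori, ?_, ?_⟩
    · simp only [hV_det, norm_one]
    · simpa only [hV_det, sub_self, norm_zero] using zpow_neg_natCast_pos.le
    · simpa only [hU_diag, sub_self, norm_zero] using zpow_neg_natCast_pos.le
  exact ⟨(U, V), ⟨hUV, hU, hV⟩, (U, V)⁻¹ * g, ⟨mul_mem (hUV.inv) hg, hUg, hVg⟩,
    mul_inv_cancel_left _ _⟩

variable (p) in
/-- The diagonal torus of `GLPair p`. -/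
def torus : (Fin 4 → ℚ_[p]ˣ) × (Fin 2 → ℚ_[p]ˣ) →* GLPair p :=
  diagonalGL.prodMap diagonalGL

variable {t : (Fin 4 → ℚ_[p]ˣ) × (Fin 2 → ℚ_[p]ˣ)} {s : ℚ_[p]ˣ}

lemma torus_mem_blockTriangularPair {α β : Type*} [LinearOrder α] [LinearOrder β]
    (b₁ : Fin 4 → α) (b₂ : Fin 2 → β) : torus p t ∈ blockTriangularPair p b₁ b₂ :=
  ⟨diagonalGL_mem_blockTriangularSubgroup b₁ t.1, diagonalGL_mem_blockTriangularSubgroup b₂ t.2⟩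

lemma IsLevel.conj_torus (hg : IsLevel m n g) (ht : ∀ i, t.1 i.rev * t.1 i = s)
    (h₁ : IsIwahori ((p : ℝ) ^ (-(n : ℤ))) (torus p t * g * (torus p t)⁻¹).1.val)
    (h₂ : IsIwahori ((p : ℝ) ^ (-(n : ℤ))) (torus p t * g * (torus p t)⁻¹).2.val) :
    IsLevel m n (torus p t * g * (torus p t)⁻¹) := by
  have hdet : (torus p t * g * (torus p t)⁻¹).2.val.det = g.2.val.det :=
    Matrix.det_units_conj (torus p t).2 g.2.val
  have hcorner : (torus p t * g * (torus p t)⁻¹).1.val 3 3 = g.1.val 3 3 := by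
    rw [← (t.1 3).mul_inv_cancel_right (g.1.val 3 3), mul_comm (g.1.val 3 3)]
    exact conj_diagonalGL_apply t.1 g.1 3 3
  have ht_sim : IsSimilitude sign₄ (torus p t).1.val (s : ℚ_[p]) :=
    .diagonal fun i => congrArg Units.val (ht i)
  have hsim := (ht_sim.mul hg.similitude).mul
    (ht_sim.of_mul_eq_one (torus p t).1.mul_inv s.inv_mul)
  rw [mul_comm (s : ℚ_[p]) g.2.val.det, s.mul_inv_cancel_right] at hsim
  exact ⟨hdet ▸ hsim, hdet ▸ hg.norm_det, h₁, h₂, hdet ▸ hg.det_sub_one,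
    hcorner ▸ hg.corner_sub_one⟩

lemma inv_rev_mul_inv {G : Type*} [CommGroup G] {k : ℕ} {t : Fin k → G} {s : G}
    (ht : ∀ i, t i.rev * t i = s) (i : Fin k) : t⁻¹ i.rev * t⁻¹ i = s⁻¹ := by
  rw [Pi.inv_apply, Pi.inv_apply, ← mul_inv, ht]

lemma torus_mem_positiveSubmonoid (ht : ∀ i, t.1 i.rev * t.1 i = s)
    (ht₁ : Monotone fun i => ‖(t.1 i : ℚ_[p])‖) (ht₂ : Monotone fun i => ‖(t.2 i : ℚ_[p])‖) :
    torus p t ∈ positiveSubmonoid (levelSubgroup p m n) (blockTriangularPair p id id)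
      (blockTriangularPair p OrderDual.toDual OrderDual.toDual) := by
  refine ⟨⟨torus_mem_blockTriangularPair _ _, torus_mem_blockTriangularPair _ _⟩,
    fun x hx => ?_, fun y hy => ?_⟩
  · obtain ⟨hx, hx₁, hx₂⟩ := hx
    exact hx.conj_torus ht
      (hx.iwahori_fst.conj_diagonalGL_of_isUpperTriangular (mem_blockTriangularSubgroup.1 hx₁) ht₁)
      (hx.iwahori_snd.conj_diagonalGL_of_isUpperTriangular (mem_blockTriangularSubgroup.1 hx₂) ht₂)
  · obtain ⟨hy, hy₁, hy₂⟩ := hy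
    have hanti {k : ℕ} {t : Fin k → ℚ_[p]ˣ} (ht : Monotone fun i => ‖(t i : ℚ_[p])‖) :
        Antitone fun i => ‖(t⁻¹ i : ℚ_[p])‖ := fun i j hij => by
      simpa using inv_anti₀ (norm_pos_iff.2 (t i).ne_zero) (ht hij)
    have := hy.conj_torus (t := t⁻¹) (inv_rev_mul_inv ht)
      (hy.iwahori_fst.conj_diagonalGL_of_isLowerTriangular (mem_blockTriangularSubgroup.1 hy₁)
        (hanti ht₁))
      (hy.iwahori_snd.conj_diagonalGL_of_isLowerTriangular (mem_blockTriangularSubgroup.1 hy₂)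
        (hanti ht₂))
    rwa [map_inv, inv_inv] at this

lemma exists_isLevel_conj_torus (ht : ∀ i, t.1 i.rev * t.1 i = s) :
    ∃ δ > 0, ∀ g : GLPair p, IsLevel m n g → (∀ i j, ‖(g.1.val - 1) i j‖ ≤ δ) →
      (∀ i j, ‖(g.2.val - 1) i j‖ ≤ δ) → IsLevel m n (torus p t * g * (torus p t)⁻¹) := by
  have hr := zpow_neg_natCast_pos (p := p) (n := n)
  obtain ⟨δ₁, hδ₁, h₁⟩ := exists_isIwahori_conj_diagonalGL hr zpow_neg_natCast_le_one t.1
  obtain ⟨δ₂, hδ₂, h₂⟩ := exists_isIwahori_conj_diagonalGL hr zpow_neg_natCast_le_one t.2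
  exact ⟨min δ₁ δ₂, lt_min hδ₁ hδ₂, fun g hg hg₁ hg₂ => hg.conj_torus ht
    (h₁ _ hg.iwahori_fst fun i j => (hg₁ i j).trans (min_le_left _ _))
    (h₂ _ hg.iwahori_snd fun i j => (hg₂ i j).trans (min_le_right _ _))⟩

/-- The matrix entries of a pair, as a point of a normed space: matrices carry no global norm. -/
def entries (g : GLPair p) : (Fin 4 → Fin 4 → ℚ_[p]) × (Fin 2 → Fin 2 → ℚ_[p]) :=
  (g.1.val, g.2.val)

lemma norm_sub_apply_le_dist_entries_fst (x y : GLPair p) (i j : Fin 4) :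
    ‖x.1.val i j - y.1.val i j‖ ≤ dist (entries x) (entries y) := by
  rw [dist_eq_norm]
  exact (norm_le_pi_norm _ j).trans ((norm_le_pi_norm _ i).trans
    (norm_fst_le (entries x - entries y)))

lemma norm_sub_apply_le_dist_entries_snd (x y : GLPair p) (i j : Fin 2) :
    ‖x.2.val i j - y.2.val i j‖ ≤ dist (entries x) (entries y) := by
  rw [dist_eq_norm]
  exact (norm_le_pi_norm _ j).trans ((norm_le_pi_norm _ i).trans
    (norm_snd_le (entries x - entries y)))

lemma totallyBounded_image_entries {S : Set (GLPair p)}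
    (hS : S ⊆ levelSubgroup p m n) : TotallyBounded (entries '' S) := by
  refine (isCompact_closedBall 0 1).totallyBounded.subset ?_
  rintro _ ⟨g, hg, rfl⟩
  have hlevel : IsLevel m n g := hS hg
  refine mem_closedBall_zero_iff.2 (norm_prod_le_iff.2 ⟨?_, ?_⟩)
  · simp only [pi_norm_le_iff_of_nonneg zero_le_one]
    exact hlevel.iwahori_fst.integral
  · simp only [pi_norm_le_iff_of_nonneg zero_le_one]
    exact hlevel.iwahori_snd.integral

lemma relIndex_conj_torus_ne_zero (ht : ∀ i, t.1 i.rev * t.1 i = s) :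
    (MulAut.conj (torus p t) • (levelSubgroup p m n ⊓ blockTriangularPair p id id)).relIndex
      (levelSubgroup p m n ⊓ blockTriangularPair p id id) ≠ 0 := by
  obtain ⟨δ, hδ, hconj⟩ :=
    exists_isLevel_conj_torus (m := m) (n := n) (t := t⁻¹) (inv_rev_mul_inv ht)
  refine relIndex_ne_zero_of_totallyBounded (totallyBounded_image_entries inf_le_left) hδ
    fun x hx y hy hxy => mem_conj_smul_iff.2 ⟨?_, ?_⟩
  · have hx_inv := hx.1.inv
    have := hconj (x⁻¹ * y) (hx_inv.mul hy.1)
      (norm_inv_mul_sub_one_apply_le hδ.le hx_inv.iwahori_fst.integral fun i j =>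
        (norm_sub_apply_le_dist_entries_fst x y i j).trans hxy.le)
      (norm_inv_mul_sub_one_apply_le hδ.le hx_inv.iwahori_snd.integral fun i j =>
        (norm_sub_apply_le_dist_entries_snd x y i j).trans hxy.le)
    rwa [map_inv, inv_inv] at this
  · have ht_mem := torus_mem_blockTriangularPair (t := t) (id : Fin 4 → Fin 4) (id : Fin 2 → Fin 2)
    exact Subgroup.mul_mem _ (Subgroup.mul_mem _ (Subgroup.inv_mem _ ht_mem)
      (Subgroup.mul_mem _ (Subgroup.inv_mem _ hx.2) hy.2)) ht_mem

end Level

section Cosets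

variable {p : ℕ} [Fact p.Prime] {m n : ℕ}

lemma lcosets_image_toMG (B : Subgroup (GLPair p)) (S : Set (GLPair p)) :
    lcosets p (toMG p '' B) (toMG p '' S) =
      (fun q : GLPair p ⧸ B => toMG p '' (QuotientGroup.mk ⁻¹' {q})) ''
        (QuotientGroup.mk '' S) := by
  rw [lcosets, Set.image_image, Set.image_image]
  refine Set.image_congr fun g _ => ?_
  rw [← Set.image_singleton, ← Set.image_singleton, ← Set.image_mul,
    QuotientGroup.preimage_image_mk_eq_mul]

lemma ncard_lcosets_image_toMG (B : Subgroup (GLPair p)) (S : Set (GLPair p)) :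
    (lcosets p (toMG p '' B) (toMG p '' S)).ncard =
      (QuotientGroup.mk '' S : Set (GLPair p ⧸ B)).ncard := by
  rw [lcosets_image_toMG]
  exact Set.ncard_image_of_injective _ ((toMG_injective p).image_injective.comp
    (QuotientGroup.mk_surjective.preimage_injective.comp Set.singleton_injective))

lemma Bmn_mul_singleton_mul_Bmn (u : GLPair p) :
    Bmn p m n * {toMG p u} * Bmn p m n =
      toMG p '' ((levelSubgroup p m n : Set (GLPair p)) * {u} * levelSubgroup p m n) := by
  rw [Set.image_mul, Set.image_mul, Set.image_singleton, image_toMG_levelSubgroup]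

lemma ncard_lcosets_Bmn_mul_singleton_mul (hn : 1 ≤ n) {u : GLPair p}
    (hu : u ∈ positiveSubmonoid (levelSubgroup p m n) (blockTriangularPair p id id)
      (blockTriangularPair p OrderDual.toDual OrderDual.toDual)) :
    (lcosets p (Bmn p m n) (Bmn p m n * {toMG p u} * Bmn p m n)).ncard =
      (MulAut.conj u • (levelSubgroup p m n ⊓ blockTriangularPair p id id)).relIndex
        (levelSubgroup p m n ⊓ blockTriangularPair p id id) := by
  rw [Bmn_mul_singleton_mul_Bmn, ← image_toMG_levelSubgroup, ncard_lcosets_image_toMG,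
    ncard_image_mk_mul_singleton_mul (hasIwahoriFactorization_levelSubgroup hn) hu]

end Cosets

section Dominant

variable (p : ℕ) [Fact p.Prime] (a b c d : ℕ)

/-- The prime `p` as a unit of `ℚ_[p]`. -/
def uniformizer : ℚ_[p]ˣ := .mk0 p (Nat.cast_ne_zero.2 (Fact.out : p.Prime).ne_zero)

/-- The diagonal entries of `vElt p a b c d`. -/
def vEntries : (Fin 4 → ℚ_[p]ˣ) × (Fin 2 → ℚ_[p]ˣ) :=
  (![uniformizer p ^ (a + b), uniformizer p ^ b, uniformizer p ^ a, 1],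
    ![uniformizer p ^ d, uniformizer p ^ c])

lemma toMG_torus_vEntries : toMG p (torus p (vEntries p a b c d)) = vElt p a b c d := by
  refine Prod.ext (congrArg Matrix.diagonal ?_) (congrArg Matrix.diagonal ?_) <;>
  · funext i
    fin_cases i <;> simp [vEntries, uniformizer]

lemma vEntries_fst_rev_mul (i : Fin 4) :
    (vEntries p a b c d).1 i.rev * (vEntries p a b c d).1 i = uniformizer p ^ (a + b) := by
  fin_cases i <;> simp [vEntries, pow_add, mul_comm]

lemma norm_uniformizer_le_one : ‖(uniformizer p : ℚ_[p])‖ ≤ 1 := Padic.norm_p_lt_one.le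

variable {a b c d}

lemma monotone_norm_vEntries_fst (hab : a ≤ b) :
    Monotone fun i => ‖((vEntries p a b c d).1 i : ℚ_[p])‖ := by
  have h {i j : ℕ} (hij : i ≤ j) := pow_le_pow_of_le_one (norm_nonneg _)
    (norm_uniformizer_le_one p) hij
  refine Fin.monotone_iff_le_succ.2 fun i => ?_
  fin_cases i
  · simpa [vEntries] using h (Nat.le_add_left b a)
  · simpa [vEntries] using h hab
  · simpa [vEntries] using h a.zero_le

lemma monotone_norm_vEntries_snd (hcd : c ≤ d) :
    Monotone fun i => ‖((vEntries p a b c d).2 i : ℚ_[p])‖ := by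
  refine Fin.monotone_iff_le_succ.2 fun i => ?_
  fin_cases i
  simpa [vEntries] using pow_le_pow_of_le_one (norm_nonneg _) (norm_uniformizer_le_one p) hcd

end Dominant

theorem stmt15_general (p : ℕ) [Fact p.Prime] (m n : ℕ) (hn : 1 ≤ n)
    (a₁ b₁ c₁ d₁ a₂ b₂ c₂ d₂ : ℕ)
    (hab₁ : a₁ ≤ b₁) (hcd₁ : c₁ ≤ d₁) (hab₂ : a₂ ≤ b₂) (hcd₂ : c₂ ≤ d₂) :
    (Bmn p m n * {vElt p a₁ b₁ c₁ d₁} * Bmn p m n * {vElt p a₂ b₂ c₂ d₂} * Bmn p m n =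
      Bmn p m n * {vElt p a₁ b₁ c₁ d₁ * vElt p a₂ b₂ c₂ d₂} * Bmn p m n) ∧
    (lcosets p (Bmn p m n)
      (Bmn p m n * {vElt p a₁ b₁ c₁ d₁ * vElt p a₂ b₂ c₂ d₂} * Bmn p m n)).Finite ∧
    (lcosets p (Bmn p m n)
        (Bmn p m n * {vElt p a₁ b₁ c₁ d₁ * vElt p a₂ b₂ c₂ d₂} * Bmn p m n)).ncard =
      (lcosets p (Bmn p m n) (Bmn p m n * {vElt p a₁ b₁ c₁ d₁} * Bmn p m n)).ncard *
        (lcosets p (Bmn p m n) (Bmn p m n * {vElt p a₂ b₂ c₂ d₂} * Bmn p m n)).ncard := by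
  simp only [← toMG_torus_vEntries, ← map_mul (toMG p)]
  have hu := torus_mem_positiveSubmonoid (m := m) (n := n) (vEntries_fst_rev_mul p a₁ b₁ c₁ d₁)
    (monotone_norm_vEntries_fst p hab₁) (monotone_norm_vEntries_snd p hcd₁)
  have hv := torus_mem_positiveSubmonoid (m := m) (n := n) (vEntries_fst_rev_mul p a₂ b₂ c₂ d₂)
    (monotone_norm_vEntries_fst p hab₂) (monotone_norm_vEntries_snd p hcd₂)
  have hcount := ncard_lcosets_Bmn_mul_singleton_mul hn (mul_mem hu hv)
  rw [relIndex_conj_mul_smul hu hv] at hcount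
  refine ⟨?_, Set.finite_of_ncard_ne_zero ?_, ?_⟩
  · rw [Bmn_mul_singleton_mul_Bmn, Bmn_mul_singleton_mul_Bmn,
      ← mul_singleton_mul_mul_singleton_mul (hasIwahoriFactorization_levelSubgroup hn) hu hv]
    simp only [Set.image_mul, Set.image_singleton, image_toMG_levelSubgroup]
  · rw [hcount]
    exact mul_ne_zero (relIndex_conj_torus_ne_zero (vEntries_fst_rev_mul p a₁ b₁ c₁ d₁))
      (relIndex_conj_torus_ne_zero (vEntries_fst_rev_mul p a₂ b₂ c₂ d₂))
  · rw [hcount, ncard_lcosets_Bmn_mul_singleton_mul hn hu,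
      ncard_lcosets_Bmn_mul_singleton_mul hn hv]

/-- `B_{m,n}·u₁·B_{m,n}·u₂·B_{m,n} = B_{m,n}·u₁u₂·B_{m,n}`, and the (finite) number of
left `B_{m,n}`-cosets in `B_{m,n}·u₁u₂·B_{m,n}` is the product of those for `u₁` and
`u₂`. -/
theorem stmt15 (p : ℕ) [Fact p.Prime] (m n : ℕ) (hn : 1 ≤ n)
    (a₁ b₁ c₁ d₁ a₂ b₂ c₂ d₂ : ℕ)
    (hab₁ : a₁ ≤ b₁) (hcd₁ : c₁ ≤ d₁) (hsum₁ : a₁ + b₁ = c₁ + d₁)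
    (hab₂ : a₂ ≤ b₂) (hcd₂ : c₂ ≤ d₂) (hsum₂ : a₂ + b₂ = c₂ + d₂) :
    (Bmn p m n * {vElt p a₁ b₁ c₁ d₁} * Bmn p m n * {vElt p a₂ b₂ c₂ d₂} * Bmn p m n =
      Bmn p m n * {vElt p a₁ b₁ c₁ d₁ * vElt p a₂ b₂ c₂ d₂} * Bmn p m n) ∧
    (lcosets p (Bmn p m n)
      (Bmn p m n * {vElt p a₁ b₁ c₁ d₁ * vElt p a₂ b₂ c₂ d₂} * Bmn p m n)).Finite ∧
    (lcosets p (Bmn p m n)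
        (Bmn p m n * {vElt p a₁ b₁ c₁ d₁ * vElt p a₂ b₂ c₂ d₂} * Bmn p m n)).ncard =
      (lcosets p (Bmn p m n) (Bmn p m n * {vElt p a₁ b₁ c₁ d₁} * Bmn p m n)).ncard *
        (lcosets p (Bmn p m n) (Bmn p m n * {vElt p a₂ b₂ c₂ d₂} * Bmn p m n)).ncard :=
  stmt15_general p m n hn a₁ b₁ c₁ d₁ a₂ b₂ c₂ d₂ hab₁ hcd₁ hab₂ hcd₂
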